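/- Let (m, α, μ) and (n, β, ν) be classical systems both satisfying detailed balance (μ_p α_{pq} = μ_q α_{qp} for all p,q, and ν_r β_{rs} = ν_s β_{sr} for all r,s), and fix coordinates k = (k_1,…,k_d), each k_i ∈ ℝ^m, and l = (l_1,…,l_d), each l_i ∈ ℝ^n. Then the Wasserstein distance from (m, α, μ) (with coordinates k) to (n, β, ν) (with coordinates l) equals the Wasserstein distance from (n, β, ν) (with coordinates l) to (m, α, μ) (with coordinates k). -/

import Mathlib

/-- A classical system: a row-stochastic matrix α with strictly positive invariant
probability vector μ. -/
def IsClassicalSystem {m : ℕ} (α : Fin m → Fin m → ℝ) (μ : Fin m → ℝ) : Prop :=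
  (∀ p q, 0 ≤ α p q) ∧ (∀ p, ∑ q, α p q = 1) ∧
  (∀ p, 0 < μ p) ∧ (∑ p, μ p = 1) ∧ (∀ q, ∑ p, μ p * α p q = μ q)

/-- A coupling of the probability vectors μ and ν. -/
def IsCoupling {m n : ℕ} (μ : Fin m → ℝ) (ν : Fin n → ℝ) (ω : Fin m → Fin n → ℝ) : Prop :=
  (∀ p r, 0 ≤ ω p r) ∧ (∀ p, ∑ r, ω p r = μ p) ∧ (∀ r, ∑ p, ω p r = ν r)

/-- A transport plan from the system (m, α, μ) to the system (n, β, ν): a coupling ω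
satisfying Σ_p ω_{pr} α_{pq} = Σ_s ω_{qs} (ν_r/ν_s) β_{rs} for all q, r. -/
def IsTransportPlan {m n : ℕ} (α : Fin m → Fin m → ℝ) (μ : Fin m → ℝ)
    (β : Fin n → Fin n → ℝ) (ν : Fin n → ℝ) (ω : Fin m → Fin n → ℝ) : Prop :=
  IsCoupling μ ν ω ∧
    ∀ (q : Fin m) (r : Fin n), ∑ p, ω p r * α p q = ∑ s, ω q s * (ν r / ν s * β r s)

/-- The quadratic transport cost of a coupling ω relative to the coordinates k and l. -/
def transportCost {d m n : ℕ} (k : Fin d → Fin m → ℝ) (l : Fin d → Fin n → ℝ)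
    (ω : Fin m → Fin n → ℝ) : ℝ :=
  ∑ i, ∑ p, ∑ r, ω p r * (k i p - l i r) ^ 2

/-- The Wasserstein distance from (m, α, μ) with coordinates k to (n, β, ν) with
coordinates l. -/
noncomputable def Wdist {d m n : ℕ} (α : Fin m → Fin m → ℝ) (μ : Fin m → ℝ)
    (β : Fin n → Fin n → ℝ) (ν : Fin n → ℝ)
    (k : Fin d → Fin m → ℝ) (l : Fin d → Fin n → ℝ) : ℝ :=
  sInf {x | ∃ ω, IsTransportPlan α μ β ν ω ∧ x = Real.sqrt (transportCost k l ω)}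

/-! Detailed balance for `(β, ν)` turns the time-reversed weights `ν r / ν s * β r s` in the
transport condition into `β s r`. The condition becomes `∑ p, ω p r * α p q = ∑ s, ω q s * β s r`,
and transposing `ω` merely exchanges its two sides, while leaving the cost unchanged. -/

section Transport

variable {d m n : ℕ} {α : Fin m → Fin m → ℝ} {μ : Fin m → ℝ}
  {β : Fin n → Fin n → ℝ} {ν : Fin n → ℝ} {ω : Fin m → Fin n → ℝ}

theorem isCoupling_swap_iff : IsCoupling ν μ (Function.swap ω) ↔ IsCoupling μ ν ω :=
  and_congr forall_comm and_comm

theorem IsCoupling.eq_zero_of_right_eq_zero (h : IsCoupling μ ν ω) {r : Fin n} (hr : ν r = 0)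
    (p : Fin m) : ω p r = 0 := by
  have hsum : ∑ p, ω p r = 0 := (h.2.2 r).trans hr
  exact (Finset.sum_eq_zero_iff_of_nonneg fun p _ => h.1 p r).mp hsum p (Finset.mem_univ p)

theorem IsCoupling.mul_reversed_eq_of_detailedBalance (h : IsCoupling μ ν ω) {r s : Fin n}
    (hrs : ν r * β r s = ν s * β s r) (q : Fin m) :
    ω q s * (ν r / ν s * β r s) = ω q s * β s r := by
  rcases eq_or_ne (ν s) 0 with hs | hs
  · rw [h.eq_zero_of_right_eq_zero hs, zero_mul, zero_mul]
  · rw [div_mul_eq_mul_div, hrs, mul_div_cancel_left₀ _ hs]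

theorem isTransportPlan_iff_of_detailedBalance (hβ : ∀ r s, ν r * β r s = ν s * β s r) :
    IsTransportPlan α μ β ν ω ↔
      IsCoupling μ ν ω ∧ ∀ q r, ∑ p, ω p r * α p q = ∑ s, ω q s * β s r :=
  and_congr_right fun hω => by
    simp only [hω.mul_reversed_eq_of_detailedBalance (hβ _ _)]

theorem isTransportPlan_swap_iff_of_detailedBalance (hα : ∀ p q, μ p * α p q = μ q * α q p)
    (hβ : ∀ r s, ν r * β r s = ν s * β s r) :
    IsTransportPlan β ν α μ (Function.swap ω) ↔ IsTransportPlan α μ β ν ω := by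
  rw [isTransportPlan_iff_of_detailedBalance hα, isTransportPlan_iff_of_detailedBalance hβ,
    isCoupling_swap_iff, forall_comm]
  exact and_congr_right fun _ => forall₂_congr fun _ _ => eq_comm

theorem transportCost_swap (k : Fin d → Fin m → ℝ) (l : Fin d → Fin n → ℝ)
    (ω : Fin m → Fin n → ℝ) :
    transportCost l k (Function.swap ω) = transportCost k l ω := by
  refine Finset.sum_congr rfl fun i _ => Finset.sum_comm.trans ?_
  simp only [Function.swap, sub_sq_comm]

end Transport

theorem stmt_7_general {d m n : ℕ} (α : Fin m → Fin m → ℝ) (μ : Fin m → ℝ)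
    (β : Fin n → Fin n → ℝ) (ν : Fin n → ℝ)
    (hα : ∀ p q, μ p * α p q = μ q * α q p)
    (hβ : ∀ r s, ν r * β r s = ν s * β s r)
    (k : Fin d → Fin m → ℝ) (l : Fin d → Fin n → ℝ) :
    Wdist α μ β ν k l = Wdist β ν α μ l k := by
  refine congrArg sInf (Set.ext fun x =>
    .trans (exists_congr fun ω => ?_) Function.swap_bijective.surjective.exists.symm)
  rw [isTransportPlan_swap_iff_of_detailedBalance hα hβ, transportCost_swap]

/-- If both classical systems satisfy detailed balance, the Wasserstein
distance between them (with fixed coordinates) is symmetric. -/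
theorem stmt_7 {d m n : ℕ} (α : Fin m → Fin m → ℝ) (μ : Fin m → ℝ)
    (β : Fin n → Fin n → ℝ) (ν : Fin n → ℝ)
    (hA : IsClassicalSystem α μ) (hB : IsClassicalSystem β ν)
    (hdbA : ∀ p q, μ p * α p q = μ q * α q p)
    (hdbB : ∀ r s, ν r * β r s = ν s * β s r)
    (k : Fin d → Fin m → ℝ) (l : Fin d → Fin n → ℝ) :
    Wdist α μ β ν k l = Wdist β ν α μ l k :=
  stmt_7_general α μ β ν hdbA hdbB k l
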